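/- (Main theorem, robust finite-time stability.) Under the standing assumptions on the delayed system, let 0 < ε₁ < ε₂ and suppose there exists η > 0 such that C(ε₁, ρ) := ( r₁ E_β((a₀+a₁+η)(T−t₀)^β) + 1 ) ε₁ + r₂ E_β((a₀+a₁+η)(T−t₀)^β) ρ ≤ ε₂, where r₁ = M (a₀+a₁+η)(a₀+a₁) / (η Γ(β+1)), r₂ = M (a₀+a₁+η) a₂ / (η Γ(β+1)), and M = sup_{s∈[t₀,T]} ( (s−t₀)^β / E_β((a₀+a₁+η)(s−t₀)^β) ). Then for every initial function ν with sup_{s∈[t₀−g,t₀]} ‖ν(s)‖ ≤ ε₁ and every disturbance d with ‖d(t)‖ ≤ ρ, any continuous x : [t₀−g, T] → ℝⁿ satisfying x = ν on [t₀−g, t₀] and x(t) = ν(t₀) + (1/Γ(β)) ∫_{t₀}^t (t−s)^{β−1} [A₀ x(s) + A₁ x(s−g(s)) + A₂ d(s) + f(s, x(s), x(s−g(s)), d(s))] ds for t ∈ [t₀, T] satisfies ‖x(t)‖ ≤ ε₂ for all t ∈ [t₀, T]. -/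

import Mathlib

open Set ENNReal MeasureTheory intervalIntegral

/-- Euclidean `ℝⁿ`. -/
abbrev Euc (n : ℕ) := EuclideanSpace ℝ (Fin n)

/-- The Mittag-Leffler function `E_β(t) = Σ_{b ≥ 0} t^b / Γ(bβ + 1)`. -/
noncomputable def mittagLeffler (β t : ℝ) : ℝ :=
  ∑' b : ℕ, t ^ b / Real.Gamma (b * β + 1)

/-- The weight function: `h(s) = 1` for `s ≤ t₀` and `h(s) = E_β(θ (s − t₀)^β)` for `s ≥ t₀`. -/
noncomputable def weight (β t₀ θ : ℝ) (s : ℝ) : ℝ :=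
  if s ≤ t₀ then 1 else mittagLeffler β (θ * (s - t₀) ^ β)

/-- The weighted generalized metric
`ϖ(x₁, x₂) = inf { b ∈ [0, ∞] : ‖x₁(t) − x₂(t)‖ ≤ b h(t) for all t ∈ [t₀ − g, T] }`. -/
noncomputable def genDist {n : ℕ} (β t₀ T g θ : ℝ) (x₁ x₂ : ℝ → Euc n) : ℝ≥0∞ :=
  sInf {b : ℝ≥0∞ | ∀ t ∈ Icc (t₀ - g) T,
    (‖x₁ t - x₂ t‖₊ : ℝ≥0∞) ≤ b * ENNReal.ofReal (weight β t₀ θ t)}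

/-- The integral operator `𝒱`:
`(𝒱 y)(t) = ν(t)` on `[t₀ − g, t₀]` and
`(𝒱 y)(t) = ν(t₀) + (1/Γ(β)) ∫_{t₀}^t (t−s)^{β−1} [A₀ y(s) + A₁ y(s−g(s)) + A₂ d(s)
  + f(s, y(s), y(s−g(s)), d(s))] ds` on `[t₀, T]`. -/
noncomputable def Vop {n p : ℕ} (β t₀ : ℝ)
    (A₀ A₁ : Euc n →L[ℝ] Euc n) (A₂ : Euc p →L[ℝ] Euc n)
    (f : ℝ → Euc n → Euc n → Euc p → Euc n) (d : ℝ → Euc p) (gdel : ℝ → ℝ)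
    (ν : ℝ → Euc n) (y : ℝ → Euc n) : ℝ → Euc n :=
  fun t =>
    if t ≤ t₀ then ν t
    else ν t₀ + (Real.Gamma β)⁻¹ •
      ∫ s in t₀..t, ((t - s) ^ (β - 1)) •
        (A₀ (y s) + A₁ (y (s - gdel s)) + A₂ (d s) + f s (y s) (y (s - gdel s)) (d s))

lemma rpow_mul_exp_neg_le_Gamma {R x : ℝ} (hR : 0 ≤ R) (hx : 1 ≤ x) :
    R ^ (x - 1) * Real.exp (-R) ≤ Real.Gamma x := by
  have hconv := Real.GammaIntegral_convergent (s := x) (by linarith)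
  have hsub : Ioi R ⊆ Ioi 0 := Ioi_subset_Ioi hR
  rw [Real.Gamma_eq_integral (by linarith)]
  calc R ^ (x - 1) * Real.exp (-R)
      = ∫ t in Ioi R, Real.exp (-t) * R ^ (x - 1) := by
        rw [MeasureTheory.integral_mul_const, integral_exp_neg_Ioi, mul_comm]
    _ ≤ ∫ t in Ioi R, Real.exp (-t) * t ^ (x - 1) := by
        refine setIntegral_mono_on ((integrableOn_exp_neg_Ioi R).mul_const _)
          (hconv.mono_set hsub) measurableSet_Ioi fun t ht => ?_
        have ht' : R ≤ t := le_of_lt ht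
        gcongr
    _ ≤ ∫ t in Ioi 0, Real.exp (-t) * t ^ (x - 1) := by
        refine setIntegral_mono_set hconv ?_ hsub.eventuallyLE
        refine (ae_restrict_iff' measurableSet_Ioi).mpr (Filter.Eventually.of_forall fun t ht => ?_)
        have ht' : (0 : ℝ) < t := ht
        simp only [Pi.zero_apply]
        positivity

lemma Gamma_natCast_mul_add_one_pos {β : ℝ} (hβ : 0 < β) (b : ℕ) :
    0 < Real.Gamma (b * β + 1) :=
  Real.Gamma_pos_of_pos (by positivity)

lemma summable_mittagLeffler {β t : ℝ} (hβ : 0 < β) (ht : 0 ≤ t) :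
    Summable fun b : ℕ => t ^ b / Real.Gamma (b * β + 1) := by
  set R : ℝ := (2 * t + 1) ^ β⁻¹
  have hR0 : 0 ≤ R := by positivity
  have hRβ : R ^ β = 2 * t + 1 := Real.rpow_inv_rpow (by positivity) hβ.ne'
  have hgeom : Summable fun b : ℕ => Real.exp R * (t / (2 * t + 1)) ^ b :=
    (summable_geometric_of_lt_one (by positivity)
      ((div_lt_one (by positivity)).mpr (by linarith))).mul_left _
  refine hgeom.of_nonneg_of_le
    (fun b => div_nonneg (by positivity) (Gamma_natCast_mul_add_one_pos hβ b).le) fun b => ?_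
  have hΓ := rpow_mul_exp_neg_le_Gamma hR0 (x := b * β + 1)
    (le_add_of_nonneg_left (by positivity))
  rw [add_sub_cancel_right, mul_comm (b : ℝ), Real.rpow_mul hR0, hRβ, Real.rpow_natCast,
    mul_comm β] at hΓ
  calc t ^ b / Real.Gamma (b * β + 1) ≤ t ^ b / ((2 * t + 1) ^ b * Real.exp (-R)) := by gcongr
    _ = Real.exp R * (t / (2 * t + 1)) ^ b := by
      rw [Real.exp_neg, div_pow]
      field_simp

lemma mittagLeffler_mono {β s t : ℝ} (hβ : 0 < β) (hs : 0 ≤ s) (hst : s ≤ t) :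
    mittagLeffler β s ≤ mittagLeffler β t := by
  refine (summable_mittagLeffler hβ hs).tsum_le_tsum (fun b => ?_)
    (summable_mittagLeffler hβ (hs.trans hst))
  have := Gamma_natCast_mul_add_one_pos hβ b
  gcongr

lemma mittagLeffler_zero (β : ℝ) : mittagLeffler β 0 = 1 := by
  rw [mittagLeffler, tsum_eq_single 0 (fun b hb => by simp [hb])]
  simp

lemma one_le_mittagLeffler {β t : ℝ} (hβ : 0 < β) (ht : 0 ≤ t) : 1 ≤ mittagLeffler β t :=
  (mittagLeffler_zero β).symm.le.trans (mittagLeffler_mono hβ le_rfl ht)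

lemma weight_of_le {β t₀ s : ℝ} (θ : ℝ) (hβ : 0 < β) (hs : t₀ ≤ s) :
    weight β t₀ θ s = mittagLeffler β (θ * (s - t₀) ^ β) := by
  rcases hs.eq_or_lt with rfl | hs
  · simp [weight, Real.zero_rpow hβ.ne', mittagLeffler_zero]
  · simp [weight, hs.not_ge]

lemma one_le_weight {β t₀ θ : ℝ} (hβ : 0 < β) (hθ : 0 ≤ θ) (s : ℝ) : 1 ≤ weight β t₀ θ s := by
  rcases le_total s t₀ with hs | hs
  · simp [weight, hs]
  · rw [weight_of_le θ hβ hs]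
    have := sub_nonneg.mpr hs
    exact one_le_mittagLeffler hβ (by positivity)

lemma monotone_weight {β t₀ θ : ℝ} (hβ : 0 < β) (hθ : 0 ≤ θ) : Monotone (weight β t₀ θ) := by
  intro s t hst
  rcases le_total s t₀ with hs | hs
  · simpa [weight, hs] using one_le_weight hβ hθ t
  · rw [weight_of_le θ hβ hs, weight_of_le θ hβ (hs.trans hst)]
    have := sub_nonneg.mpr hs
    exact mittagLeffler_mono hβ (by positivity) (by gcongr)

lemma intervalIntegrable_sub_rpow {β : ℝ} (hβ : 0 < β) (a t : ℝ) :
    IntervalIntegrable (fun s => (t - s) ^ (β - 1)) volume a t := by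
  simpa using (intervalIntegral.intervalIntegrable_rpow' (a := t - a) (b := 0)
    (r := β - 1) (by linarith)).comp_sub_left t

lemma integral_sub_rpow_mul_sub_rpow {β γ a t : ℝ} (hβ : 0 < β) (hγ : 0 ≤ γ) (hat : a < t) :
    ∫ s in a..t, (t - s) ^ (β - 1) * (s - a) ^ γ =
      (t - a) ^ (γ + β) * (Real.Gamma β * Real.Gamma (γ + 1) / Real.Gamma (γ + β + 1)) := by
  have hpos : 0 < t - a := sub_pos.mpr hat
  have hshift := intervalIntegral.integral_comp_sub_right (a := a) (b := t)
    (fun s => (t - a - s) ^ (β - 1) * s ^ γ) a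
  simp only [sub_sub_sub_cancel_right, sub_self] at hshift
  rw [hshift]
  have hscaled := Complex.betaIntegral_scaled ((γ + 1 : ℝ) : ℂ) (β : ℂ) hpos
  rw [Complex.betaIntegral_eq_Gamma_mul_div _ _ (by simp; linarith) (by simpa using hβ)] at hscaled
  apply Complex.ofReal_injective
  rw [← intervalIntegral.integral_ofReal]
  have hcongr : ∀ s ∈ uIcc 0 (t - a),
      (((t - a - s) ^ (β - 1) * s ^ γ : ℝ) : ℂ) =
        (s : ℂ) ^ (((γ + 1 : ℝ) : ℂ) - 1) * (((t - a : ℝ) : ℂ) - s) ^ ((β : ℂ) - 1) := by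
    intro s hs
    rw [uIcc_of_le hpos.le] at hs
    rw [Complex.ofReal_mul, Complex.ofReal_cpow (sub_nonneg.mpr hs.2), Complex.ofReal_cpow hs.1]
    push_cast
    rw [mul_comm, add_sub_cancel_right]
  rw [intervalIntegral.integral_congr hcongr, hscaled]
  rw [Complex.ofReal_mul, Complex.ofReal_cpow hpos.le, Complex.ofReal_div, Complex.ofReal_mul,
    ← Complex.ofReal_add, Complex.Gamma_ofReal, Complex.Gamma_ofReal, Complex.Gamma_ofReal,
    mul_comm (Real.Gamma β : ℂ), show γ + 1 + β = γ + β + 1 by ring]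
  push_cast
  congr 2
  ring

lemma intervalIntegrable_sub_rpow_mul_weight {β θ : ℝ} (hβ : 0 < β) (hθ : 0 ≤ θ) (t₀ t : ℝ)
    (ht : t₀ ≤ t) :
    IntervalIntegrable (fun s => (t - s) ^ (β - 1) * weight β t₀ θ s) volume t₀ t := by
  have hint := intervalIntegrable_sub_rpow hβ t₀ t
  rw [intervalIntegrable_iff_integrableOn_Ioc_of_le ht] at hint ⊢
  refine Integrable.mul_bdd (c := weight β t₀ θ t) hint
    (monotone_weight hβ hθ).measurable.aestronglyMeasurable ?_
  refine (ae_restrict_iff' measurableSet_Ioc).mpr (Filter.Eventually.of_forall fun s hs => ?_)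
  rw [Real.norm_of_nonneg (zero_le_one.trans (one_le_weight hβ hθ s))]
  exact monotone_weight hβ hθ hs.2

/-- The fractional integral of `weight` is at most `weight / θ`. -/
lemma integral_sub_rpow_mul_weight_le {β θ t₀ t : ℝ} (hβ : 0 < β) (hθ : 0 < θ) (ht : t₀ < t) :
    ∫ s in t₀..t, (t - s) ^ (β - 1) * weight β t₀ θ s ≤
      Real.Gamma β / θ * weight β t₀ θ t := by
  have hτ : 0 < t - t₀ := sub_pos.mpr ht
  have hΓ := Real.Gamma_pos_of_pos hβ
  let F : ℕ → ℝ → ℝ := fun b s =>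
    θ ^ b / Real.Gamma (b * β + 1) * ((t - s) ^ (β - 1) * (s - t₀) ^ (b * β))
  have hF_int (b : ℕ) : IntegrableOn (F b) (Ioc t₀ t) := by
    rw [← intervalIntegrable_iff_integrableOn_Ioc_of_le ht.le]
    refine ((intervalIntegrable_sub_rpow hβ t₀ t).mul_continuousOn ?_).const_mul _
    exact ((continuous_id.sub continuous_const).rpow_const
      fun s => Or.inr (by positivity)).continuousOn
  have hterm (b : ℕ) : ∫ s in Ioc t₀ t, F b s =
      Real.Gamma β / θ * ((θ * (t - t₀) ^ β) ^ (b + 1) / Real.Gamma ((b + 1 : ℕ) * β + 1)) := by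
    have hb := Gamma_natCast_mul_add_one_pos hβ b
    rw [← intervalIntegral.integral_of_le ht.le, intervalIntegral.integral_const_mul,
      integral_sub_rpow_mul_sub_rpow hβ (by positivity) ht, mul_pow, ← Real.rpow_natCast
      ((t - t₀) ^ β), ← Real.rpow_mul hτ.le, pow_succ]
    have e₁ : β * ((b + 1 : ℕ) : ℝ) = b * β + β := by push_cast; ring
    have e₂ : ((b + 1 : ℕ) : ℝ) * β = b * β + β := by push_cast; ring
    rw [e₁, e₂]
    field_simp
  have hnonneg (b : ℕ) : ∀ s ∈ Ioc t₀ t, 0 ≤ F b s := fun s hs => by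
    have := Gamma_natCast_mul_add_one_pos hβ b
    have := sub_nonneg.mpr hs.1.le
    have := sub_nonneg.mpr hs.2
    positivity
  have hsum := summable_mittagLeffler hβ (t := θ * (t - t₀) ^ β) (by positivity)
  have hsum' := ((summable_nat_add_iff 1).mpr hsum).mul_left (Real.Gamma β / θ)
  have hF_sum : Summable fun b => ∫ s in Ioc t₀ t, ‖F b s‖ := by
    refine hsum'.congr fun b => ?_
    rw [← hterm b]
    exact setIntegral_congr_fun measurableSet_Ioc fun s hs =>
      (Real.norm_of_nonneg (hnonneg b s hs)).symm
  have hweight : ∫ s in Ioc t₀ t, (t - s) ^ (β - 1) * weight β t₀ θ s =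
      ∫ s in Ioc t₀ t, ∑' b, F b s := by
    refine setIntegral_congr_fun measurableSet_Ioc fun s hs => ?_
    have hs0 := sub_nonneg.mpr hs.1.le
    simp only [weight_of_le θ hβ hs.1.le, mittagLeffler, F, ← tsum_mul_left]
    refine tsum_congr fun b => ?_
    rw [mul_pow, ← Real.rpow_natCast ((s - t₀) ^ β), ← Real.rpow_mul hs0, mul_comm β]
    ring
  rw [intervalIntegral.integral_of_le ht.le, hweight,
    ← (hasSum_integral_of_summable_integral_norm hF_int hF_sum).tsum_eq, tsum_congr hterm,
    tsum_mul_left, weight_of_le θ hβ ht.le, mittagLeffler, hsum.tsum_eq_zero_add]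
  gcongr
  simp

/-- Main theorem (robust finite-time stability). Under the standing assumptions, if
there is `η > 0` with
`C(ε₁, ρ) = (r₁ E_β((a₀+a₁+η)(T−t₀)^β) + 1) ε₁ + r₂ E_β((a₀+a₁+η)(T−t₀)^β) ρ ≤ ε₂`,
where `r₁ = M(a₀+a₁+η)(a₀+a₁)/(η Γ(β+1))` and `r₂ = M(a₀+a₁+η)a₂/(η Γ(β+1))`, then
every solution of the Volterra integral equation with `‖ν‖ ≤ ε₁` and `‖d(t)‖ ≤ ρ`
satisfies `‖x(t)‖ ≤ ε₂` on `[t₀, T]`. -/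
theorem robust_finite_time_stability {n p : ℕ} (β t₀ T g η : ℝ)
    (hβ0 : 0 < β) (hβ1 : β < 1) (hT : t₀ < T) (hg : 0 ≤ g) (hη : 0 < η)
    (gdel : ℝ → ℝ) (hgdel_cont : ContinuousOn gdel (Icc t₀ T))
    (hgdel_mem : ∀ t ∈ Icc t₀ T, gdel t ∈ Icc 0 g)
    (A₀ A₁ : Euc n →L[ℝ] Euc n) (A₂ : Euc p →L[ℝ] Euc n)
    (κ : ℝ → ℝ) (hκ_cont : Continuous κ) (hκ_nonneg : ∀ s, 0 ≤ κ s)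
    (f : ℝ → Euc n → Euc n → Euc p → Euc n)
    (hf_cont : Continuous fun q : ℝ × Euc n × Euc n × Euc p => f q.1 q.2.1 q.2.2.1 q.2.2.2)
    (hf_lip : ∀ (s : ℝ) (u₁ u₂ : Euc n) (u₃ : Euc p) (w₁ w₂ : Euc n) (w₃ : Euc p),
      ‖f s u₁ u₂ u₃ - f s w₁ w₂ w₃‖ ≤ κ s * (‖u₁ - w₁‖ + ‖u₂ - w₂‖ + ‖u₃ - w₃‖))
    (hf_zero : ∀ s : ℝ, f s 0 0 0 = 0)
    (ρ : ℝ) (hρ : 0 < ρ) (d : ℝ → Euc p) (hd_cont : Continuous d) (hd : ∀ t, ‖d t‖ ≤ ρ)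
    (ν : ℝ → Euc n) (hν : ContinuousOn ν (Icc (t₀ - g) t₀))
    (a₀ a₁ a₂ : ℝ)
    (ha₀ : IsGreatest ((fun s => ‖A₀‖ + κ s) '' Icc t₀ T) a₀)
    (ha₁ : IsGreatest ((fun s => ‖A₁‖ + κ s) '' Icc t₀ T) a₁)
    (ha₂ : IsGreatest ((fun s => ‖A₂‖ + κ s) '' Icc t₀ T) a₂)
    (M : ℝ) (hM : M = sSup ((fun s : ℝ =>
      (s - t₀) ^ β / mittagLeffler β ((a₀ + a₁ + η) * (s - t₀) ^ β)) '' Icc t₀ T))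
    (νnorm : ℝ) (hνnorm : νnorm = sSup ((fun s => ‖ν s‖) '' Icc (t₀ - g) t₀))
    (ε₁ ε₂ : ℝ) (hε₁ : 0 < ε₁) (hε₁₂ : ε₁ < ε₂)
    (hC : (M * (a₀ + a₁ + η) * (a₀ + a₁) / (η * Real.Gamma (β + 1)) *
          mittagLeffler β ((a₀ + a₁ + η) * (T - t₀) ^ β) + 1) * ε₁ +
        M * (a₀ + a₁ + η) * a₂ / (η * Real.Gamma (β + 1)) *
          mittagLeffler β ((a₀ + a₁ + η) * (T - t₀) ^ β) * ρ ≤ ε₂)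
    (hν_small : νnorm ≤ ε₁)
    (x : ℝ → Euc n) (hx_cont : ContinuousOn x (Icc (t₀ - g) T))
    (hx_init : ∀ s ∈ Icc (t₀ - g) t₀, x s = ν s)
    (hx_eq : ∀ t ∈ Icc t₀ T, x t = ν t₀ + (Real.Gamma β)⁻¹ •
      ∫ s in t₀..t, ((t - s) ^ (β - 1)) •
        (A₀ (x s) + A₁ (x (s - gdel s)) + A₂ (d s)
          + f s (x s) (x (s - gdel s)) (d s))) :
    ∀ t ∈ Icc t₀ T, ‖x t‖ ≤ ε₂ := by
  have ha₀_le : ∀ s ∈ Icc t₀ T, ‖A₀‖ + κ s ≤ a₀ := fun s hs => ha₀.2 (mem_image_of_mem _ hs)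
  have ha₁_le : ∀ s ∈ Icc t₀ T, ‖A₁‖ + κ s ≤ a₁ := fun s hs => ha₁.2 (mem_image_of_mem _ hs)
  have ha₂_le : ∀ s ∈ Icc t₀ T, ‖A₂‖ + κ s ≤ a₂ := fun s hs => ha₂.2 (mem_image_of_mem _ hs)
  have ht₀ : t₀ ∈ Icc t₀ T := left_mem_Icc.mpr hT.le
  have ha₀_nonneg : 0 ≤ a₀ := (add_nonneg (norm_nonneg _) (hκ_nonneg t₀)).trans (ha₀_le t₀ ht₀)
  have ha₁_nonneg : 0 ≤ a₁ := (add_nonneg (norm_nonneg _) (hκ_nonneg t₀)).trans (ha₁_le t₀ ht₀)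
  have ha₂_nonneg : 0 ≤ a₂ := (add_nonneg (norm_nonneg _) (hκ_nonneg t₀)).trans (ha₂_le t₀ ht₀)
  set θ := a₀ + a₁ + η with hθ_def
  have hθ : 0 < θ := by positivity
  have hw_one := one_le_weight (t₀ := t₀) hβ0 hθ.le
  have hw_mono := monotone_weight (t₀ := t₀) hβ0 hθ.le
  have hΓ := Real.Gamma_pos_of_pos hβ0
  have hΓ_succ : Real.Gamma (β + 1) = β * Real.Gamma β := Real.Gamma_add_one hβ0.ne'
  have hν_le : ∀ s ∈ Icc (t₀ - g) t₀, ‖ν s‖ ≤ ε₁ := fun s hs =>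
    (hνnorm ▸ le_csSup (isCompact_Icc.image_of_continuousOn hν.norm).bddAbove
      (mem_image_of_mem _ hs) : ‖ν s‖ ≤ νnorm).trans hν_small
  have hν₀ : ‖ν t₀‖ ≤ ε₁ := hν_le t₀ (right_mem_Icc.mpr (by linarith))
  have hM_le : ∀ s ∈ Icc t₀ T, (s - t₀) ^ β ≤ M * weight β t₀ θ s := by
    intro s hs
    rw [← div_le_iff₀ (zero_lt_one.trans_le (hw_one s)), weight_of_le θ hβ0 hs.1, hM]
    refine le_csSup ⟨(T - t₀) ^ β, ?_⟩ (mem_image_of_mem _ hs)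
    rintro _ ⟨r, hr, rfl⟩
    have hr0 := sub_nonneg.mpr hr.1
    exact (div_le_self (by positivity) (one_le_mittagLeffler hβ0 (by positivity))).trans
      (by gcongr; exact hr.2)
  have hM_nonneg : 0 ≤ M := by
    have h := hM_le t₀ ht₀
    rw [sub_self, Real.zero_rpow hβ0.ne'] at h
    exact nonneg_of_mul_nonneg_left h (zero_lt_one.trans_le (hw_one t₀))
  set K := (a₀ + a₁) * ε₁ + a₂ * ρ with hK
  have hK_nonneg : 0 ≤ K := by positivity
  -- the weighted supremum distance between `x` and the constant `ν t₀`
  set q : ℝ → ℝ := fun s => ‖x s - ν t₀‖ / weight β t₀ θ s with hq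
  set m := sSup (q '' Icc t₀ T)
  have hq_bdd : BddAbove (q '' Icc t₀ T) := by
    have hcont : ContinuousOn (fun s => ‖x s - ν t₀‖) (Icc t₀ T) :=
      ((hx_cont.mono (Icc_subset_Icc_left (by linarith))).sub continuousOn_const).norm
    obtain ⟨B, hB⟩ := (isCompact_Icc.image_of_continuousOn hcont).bddAbove
    refine ⟨B, ?_⟩
    rintro _ ⟨s, hs, rfl⟩
    exact (div_le_self (norm_nonneg _) (hw_one s)).trans (hB (mem_image_of_mem _ hs))
  have hq_le : ∀ s ∈ Icc t₀ T, q s ≤ m := fun s hs => le_csSup hq_bdd (mem_image_of_mem _ hs)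
  have hm_nonneg : 0 ≤ m := (div_nonneg (norm_nonneg _)
    (zero_le_one.trans (hw_one t₀))).trans (hq_le t₀ ht₀)
  have hdist : ∀ s ∈ Icc t₀ T, ‖x s - ν t₀‖ ≤ m * weight β t₀ θ s := fun s hs =>
    (div_le_iff₀ (zero_lt_one.trans_le (hw_one s))).mp (hq_le s hs)
  have hx_le : ∀ s ∈ Icc (t₀ - g) T, ‖x s‖ ≤ ε₁ + m * weight β t₀ θ s := by
    intro s hs
    rcases le_total s t₀ with h | h
    · rw [hx_init s ⟨hs.1, h⟩]
      have := mul_nonneg hm_nonneg (zero_le_one.trans (hw_one s))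
      linarith [hν_le s ⟨hs.1, h⟩]
    · linarith [hdist s ⟨h, hs.2⟩, norm_le_norm_add_norm_sub' (x s) (ν t₀)]
  have hrhs : ∀ s ∈ Icc t₀ T,
      ‖A₀ (x s) + A₁ (x (s - gdel s)) + A₂ (d s) + f s (x s) (x (s - gdel s)) (d s)‖ ≤
        K + (a₀ + a₁) * m * weight β t₀ θ s := by
    intro s hs
    have hgs := hgdel_mem s hs
    have hx₁ := hx_le s ⟨by linarith [hs.1], hs.2⟩
    have hx₂ : ‖x (s - gdel s)‖ ≤ ε₁ + m * weight β t₀ θ s :=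
      (hx_le (s - gdel s) ⟨by linarith [hs.1, hgs.2], by linarith [hs.2, hgs.1]⟩).trans
        (by gcongr; exact hw_mono (by linarith [hgs.1]))
    have hf := hf_lip s (x s) (x (s - gdel s)) (d s) 0 0 0
    simp only [hf_zero, sub_zero] at hf
    calc ‖A₀ (x s) + A₁ (x (s - gdel s)) + A₂ (d s) + f s (x s) (x (s - gdel s)) (d s)‖
        ≤ ‖A₀ (x s)‖ + ‖A₁ (x (s - gdel s))‖ + ‖A₂ (d s)‖
          + ‖f s (x s) (x (s - gdel s)) (d s)‖ := norm_add₄_le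
      _ ≤ ‖A₀‖ * ‖x s‖ + ‖A₁‖ * ‖x (s - gdel s)‖ + ‖A₂‖ * ‖d s‖
          + κ s * (‖x s‖ + ‖x (s - gdel s)‖ + ‖d s‖) := by
        gcongr <;> exact ContinuousLinearMap.le_opNorm _ _
      _ = (‖A₀‖ + κ s) * ‖x s‖ + (‖A₁‖ + κ s) * ‖x (s - gdel s)‖ + (‖A₂‖ + κ s) * ‖d s‖ := by
        ring
      _ ≤ a₀ * (ε₁ + m * weight β t₀ θ s) + a₁ * (ε₁ + m * weight β t₀ θ s) + a₂ * ρ := by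
        gcongr
        exacts [ha₀_le s hs, ha₁_le s hs, ha₂_le s hs, hd s]
      _ = K + (a₀ + a₁) * m * weight β t₀ θ s := by rw [hK]; ring
  have hstep : ∀ t ∈ Icc t₀ T, q t ≤ K * M / Real.Gamma (β + 1) + (a₀ + a₁) / θ * m := by
    intro t ht
    rcases ht.1.eq_or_lt with rfl | ht₀t
    · have : x t₀ = ν t₀ := hx_init t₀ (right_mem_Icc.mpr (by linarith))
      simp only [hq, this, sub_self, norm_zero, zero_div]
      positivity
    simp only [hq]
    rw [div_le_iff₀ (zero_lt_one.trans_le (hw_one t)), hx_eq t ht, add_sub_cancel_left, norm_smul,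
      Real.norm_of_nonneg (inv_nonneg.mpr hΓ.le)]
    have hk_int := intervalIntegrable_sub_rpow hβ0 t₀ t
    have hkw_int := intervalIntegrable_sub_rpow_mul_weight hβ0 hθ.le t₀ t ht.1
    have hk : ∫ s in t₀..t, (t - s) ^ (β - 1) = (t - t₀) ^ β / β := by
      rw [intervalIntegral.integral_comp_sub_left (fun s => s ^ (β - 1)) t, sub_self,
        integral_rpow (Or.inl (by linarith)), sub_add_cancel, Real.zero_rpow hβ0.ne', sub_zero]
    have hbound := intervalIntegral.norm_integral_le_of_norm_le (μ := volume)
      (f := fun s => ((t - s) ^ (β - 1)) • (A₀ (x s) + A₁ (x (s - gdel s)) + A₂ (d s)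
          + f s (x s) (x (s - gdel s)) (d s)))
      (g := fun s => K * (t - s) ^ (β - 1) +
        (a₀ + a₁) * m * ((t - s) ^ (β - 1) * weight β t₀ θ s)) ht.1
      (Filter.Eventually.of_forall fun s hs => by
        have hts : 0 ≤ (t - s) ^ (β - 1) := Real.rpow_nonneg (sub_nonneg.mpr hs.2) _
        rw [norm_smul, Real.norm_of_nonneg hts]
        have := mul_le_mul_of_nonneg_left (hrhs s ⟨hs.1.le, hs.2.trans ht.2⟩) hts
        linarith)
      ((hk_int.const_mul _).add (hkw_int.const_mul _))
    rw [intervalIntegral.integral_add (hk_int.const_mul _) (hkw_int.const_mul _),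
      intervalIntegral.integral_const_mul, intervalIntegral.integral_const_mul, hk] at hbound
    calc (Real.Gamma β)⁻¹ * ‖∫ s in t₀..t, ((t - s) ^ (β - 1)) •
          (A₀ (x s) + A₁ (x (s - gdel s)) + A₂ (d s) + f s (x s) (x (s - gdel s)) (d s))‖
        ≤ (Real.Gamma β)⁻¹ * (K * (M * weight β t₀ θ t / β) +
          (a₀ + a₁) * m * (Real.Gamma β / θ * weight β t₀ θ t)) := by
          refine mul_le_mul_of_nonneg_left (hbound.trans ?_) (inv_nonneg.mpr hΓ.le)
          gcongr
          exacts [hM_le t ht, integral_sub_rpow_mul_weight_le hβ0 hθ ht₀t]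
      _ = (K * M / Real.Gamma (β + 1) + (a₀ + a₁) / θ * m) * weight β t₀ θ t := by
        rw [hΓ_succ]
        field_simp
  have hm_le : m ≤ K * M / Real.Gamma (β + 1) + (a₀ + a₁) / θ * m := by
    refine csSup_le ⟨q t₀, mem_image_of_mem _ ht₀⟩ ?_
    rintro _ ⟨t, ht, rfl⟩
    exact hstep t ht
  have hm_bound : m ≤ M * θ * K / (η * Real.Gamma (β + 1)) := by
    have hΓ' : 0 < Real.Gamma (β + 1) := Real.Gamma_pos_of_pos (by linarith)
    have hratio : (a₀ + a₁) / θ = 1 - η / θ := by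
      rw [eq_sub_iff_add_eq, ← add_div, ← hθ_def, div_self hθ.ne']
    have h : η / θ * m ≤ K * M / Real.Gamma (β + 1) := by
      rw [hratio] at hm_le
      linarith
    calc m = θ / η * (η / θ * m) := by field_simp
      _ ≤ θ / η * (K * M / Real.Gamma (β + 1)) := by gcongr
      _ = M * θ * K / (η * Real.Gamma (β + 1)) := by field_simp
  intro t ht
  have hwT := weight_of_le θ hβ0 hT.le
  calc ‖x t‖ ≤ ε₁ + m * weight β t₀ θ t := hx_le t ⟨by linarith [ht.1], ht.2⟩
    _ ≤ ε₁ + M * θ * K / (η * Real.Gamma (β + 1)) * weight β t₀ θ T := by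
      gcongr
      exacts [zero_le_one.trans (hw_one t), hw_mono ht.2]
    _ ≤ ε₂ := by
      refine le_trans (le_of_eq ?_) hC
      rw [hwT, hK]
      ring
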